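/- Let m ≥ 1 and consider, for t ∈ ℂ with |t| → 0, the m solutions of R_m(z) = −e^t, i.e. the zeros of P_m(z) + e^t P_m(−z). The zeros of M_m(π,z) = P_m(z) + P_m(−z) form conjugate pairs ±i ρ_ℓ with ρ_ℓ ∈ ℝ, and near each pair the solutions satisfy ẑ_{2ℓ}(t,π) = i ρ_ℓ + γ_ℓ t + O(t²) and ẑ_{2ℓ+1}(t,π) = −i ρ_ℓ + γ_ℓ t + O(t²) with the SAME real constant γ_ℓ > 1 for both members of the pair. If m is even, these account for all m solutions; if m is odd, the remaining solution satisfies ẑ_m(t,π) = E_m/t + O(1) with a constant E_m > 0. -/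

import Mathlib

/-! STATEMENT 11: description of the `m` solutions of `R_m(z) = −e^t` as `|t| → 0`:
zeros of `M_m(π,·) = P_m(z) + P_m(−z)` form conjugate pairs `±i ρ_ℓ`, near which the
solutions expand as `±i ρ_ℓ + γ_ℓ t + O(t²)` with the SAME real `γ_ℓ > 1`; for odd `m`
the remaining solution is `E_m/t + O(1)` with `E_m > 0`. -/

open Finset Complex Topology Asymptotics Polynomial
open scoped Real

/-- `p_j = (2m−j)!/(j!(m−j)!)`, the coefficients of the Padé numerator `P_m`. -/
noncomputable def pcoef (m j : ℕ) : ℂ :=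
  ((2 * m - j).factorial : ℂ) / ((j.factorial : ℂ) * ((m - j).factorial : ℂ))

/-- The numerator `P_m` of the `(m,m)`-Padé approximant of the exponential. -/
noncomputable def Pgauss (m : ℕ) (z : ℂ) : ℂ :=
  ∑ j ∈ Finset.range (m + 1), pcoef m j * z ^ j

/-- The stability function `R_m = P_m(z)/P_m(−z)` of the m-stage Gauss method. -/
noncomputable def Rgauss (m : ℕ) (z : ℂ) : ℂ := Pgauss m z / Pgauss m (-z)

/-- `M_m(θ,z) = P_m(z) − e^{iθ}P_m(−z)` as a polynomial in `z`. -/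
noncomputable def MgaussPoly (m : ℕ) (θ : ℝ) : Polynomial ℂ :=
  ∑ j ∈ Finset.range (m + 1),
    Polynomial.C (pcoef m j * (1 + (-1) ^ (j + 1) * Complex.exp ((θ : ℂ) * Complex.I)))
      * Polynomial.X ^ j

/-- `P_m(z) − w·P_m(−z)` as a polynomial in `z`; its roots are the solutions of
`R_m(z) = w`. -/
noncomputable def QPade (m : ℕ) (w : ℂ) : Polynomial ℂ :=
  ∑ j ∈ Finset.range (m + 1),
    Polynomial.C (pcoef m j * (1 - (-1) ^ j * w)) * Polynomial.X ^ j

/-!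
The numerators satisfy `P_{m+2} = 2(2m+3) P_{m+1} + z² P_m`, hence so do the polynomials
`P_m(z) - w P_m(-z)`, and the continued fraction of consecutive quotients keeps them nonzero in a
half-plane: `P_m` has no zeros with `Re z ≥ 0`, and `P_m(z) + P_m(-z)` none with `Re z ≠ 0`.

The recurrence also gives the Wronskian identity `R'/R = 1 - (-z²)^m / (P(z) P(-z))` for `R = R_m`.
On the imaginary axis the right-hand side is real and less than `1` away from the origin, and it is
positive because `P'/P` has positive real part to the right of all zeros of `P`. So every zero `iy`
of `P(z) + P(-z)` is simple, and inverting `R` there yields a branch of `R(ζ(t)) = -e^t` with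
`ζ'(0) = (R/R')(iy) > 1`, the same at `iy` and `-iy`. For odd `m` one root escapes to infinity;
Vieta's formula expresses it as `m(m+1)(e^t+1)/(e^t-1)` minus the sum of the bounded branches.
-/

/-! ### Analytic branches and asymptotics -/

theorem isBigO_sub_linear_of_analyticAt_zero {𝕜 E : Type*} [NontriviallyNormedField 𝕜] [CharZero 𝕜]
    [NormedAddCommGroup E] [NormedSpace 𝕜 E] [CompleteSpace E] {f : 𝕜 → E} {c : E}
    (hf : AnalyticAt 𝕜 f 0) (hc : HasDerivAt f c 0) :
    (fun t ↦ f t - (f 0 + t • c)) =O[𝓝 0] fun t : 𝕜 ↦ t ^ 2 := by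
  obtain ⟨F, hF, hfF⟩ := hf.exists_eq_sum_add_pow_mul 2
  have hremainder : ∀ t, f t - (f 0 + t • c) = t ^ 2 • F t := fun t ↦ by
    simp [hfF t, Finset.sum_range_succ, iteratedDeriv_one, hc.deriv]
  simpa only [hremainder, smul_eq_mul, mul_one] using
    (isBigO_refl (fun t : 𝕜 ↦ t ^ 2) _).smul (hF.continuousAt.tendsto.isBigO_one 𝕜)

theorem exists_analyticAt_eq_mul_exp {f : ℂ → ℂ} {a : ℂ} (hf : AnalyticAt ℂ f a)
    (hlog : logDeriv f a ≠ 0) :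
    ∃ ζ : ℂ → ℂ, AnalyticAt ℂ ζ 0 ∧ ζ 0 = a ∧ HasDerivAt ζ (logDeriv f a)⁻¹ 0 ∧
      ∀ᶠ t in 𝓝 0, f (ζ t) = f a * Complex.exp t := by
  obtain ⟨hderiv, -⟩ := div_ne_zero_iff.1 (logDeriv_apply f a ▸ hlog)
  let r := hf.hasStrictDerivAt.localInverse _ _ _ hderiv
  let w : ℂ → ℂ := fun t ↦ f a * Complex.exp t
  have hw0 : w 0 = f a := by simp [w]
  have hw : HasDerivAt w (f a) 0 := by
    simpa [w] using (Complex.hasDerivAt_exp 0).const_mul (f a)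
  have hr : HasDerivAt r (deriv f a)⁻¹ (w 0) :=
    hw0 ▸ (hf.hasStrictDerivAt.to_localInverse hderiv).hasDerivAt
  have hright : ∀ᶠ y in 𝓝 (w 0), f (r y) = y :=
    hw0 ▸ HasStrictDerivAt.eventually_right_inverse ..
  refine ⟨r ∘ w, ?_, ?_, ?_, hw.continuousAt.tendsto.eventually hright⟩
  · exact AnalyticAt.comp (hw0 ▸ hf.analyticAt_localInverse hderiv) (by fun_prop)
  · rw [Function.comp_apply, hw0]
    exact HasStrictFDerivAt.localInverse_apply_image ..
  · simpa [logDeriv_apply, div_eq_inv_mul, mul_comm] using hr.comp 0 hw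

theorem isBigO_exp_add_one_div_exp_sub_one :
    (fun t : ℂ ↦ (Complex.exp t + 1) / (Complex.exp t - 1) - 2 / t) =O[𝓝[≠] 0]
      fun _ ↦ (1 : ℂ) := by
  have hnum : (fun t : ℂ ↦ t * (Complex.exp t + 1) - 2 * (Complex.exp t - 1)) =O[𝓝 0]
      fun t ↦ t ^ 2 := by
    have hderiv : HasDerivAt (fun t : ℂ ↦ t * (Complex.exp t + 1) - 2 * (Complex.exp t - 1))
        0 0 :=
      (((hasDerivAt_id (0 : ℂ)).mul ((Complex.hasDerivAt_exp 0).add_const 1)).sub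
        (((Complex.hasDerivAt_exp 0).sub_const 1).const_mul 2)).congr_deriv (by norm_num)
    simpa using isBigO_sub_linear_of_analyticAt_zero (by fun_prop) hderiv
  have hexp : (fun t : ℂ ↦ t) =O[𝓝 0] fun t ↦ Complex.exp t - 1 := by
    have hsub := (Complex.hasDerivAt_exp 0).isTheta_sub (Complex.exp_ne_zero 0)
    simpa [Function.comp_def] using hsub.isBigO_symm.comp_tendsto
      (Filter.tendsto_id.prodMk Filter.tendsto_const_pure)
  have hinv : (fun t : ℂ ↦ (t * (Complex.exp t - 1))⁻¹) =O[𝓝 0] fun t ↦ (t * t)⁻¹ :=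
    ((isBigO_refl _ _).mul hexp).inv_rev (.of_forall fun t ht ↦ by simp [mul_self_eq_zero.1 ht])
  refine ((hnum.mul hinv).mono nhdsWithin_le_nhds).congr' ?_ ?_
  · filter_upwards [hexp.eq_zero_imp.filter_mono nhdsWithin_le_nhds, self_mem_nhdsWithin]
      with t himp ht
    have hexp_ne := mt himp ht
    rw [Set.mem_compl_singleton_iff] at ht
    field_simp
  · filter_upwards [self_mem_nhdsWithin] with t ht
    rw [Set.mem_compl_singleton_iff] at ht
    field_simp

theorem eventually_injective_of_tendsto {ι α X : Type*} [Finite ι] [TopologicalSpace X] [T2Space X]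
    {l : Filter α} {f : ι → α → X} {a : ι → X} (ha : Function.Injective a)
    (hf : ∀ i, Filter.Tendsto (f i) l (𝓝 (a i))) :
    ∀ᶠ t in l, Function.Injective fun i ↦ f i t := by
  have hne : ∀ i j, ∀ᶠ t in l, f i t = f j t → i = j := fun i j ↦ by
    by_cases hij : i = j
    · exact .of_forall fun _ _ ↦ hij
    · have hoff_diag : (Set.diagonal X)ᶜ ∈ 𝓝 (a i, a j) :=
        isClosed_diagonal.isOpen_compl.mem_nhds (ha.ne hij)
      filter_upwards [(hf i).prodMk_nhds (hf j) hoff_diag] with t ht heq using absurd heq ht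
  simpa only [Function.Injective, Filter.eventually_all] using hne

/-! ### Roots of polynomials -/

theorem map_univ_val_sum {α β γ : Type*} [Fintype α] [Fintype β] (f : α ⊕ β → γ) :
    (univ : Finset (α ⊕ β)).val.map f
      = univ.val.map (fun a ↦ f (.inl a)) + univ.val.map fun b ↦ f (.inr b) := by
  simp [← univ_disjSum_univ, Multiset.disjSum]

theorem exists_map_univ_val_eq_of_card {α : Type*} {s : Multiset α} {k : ℕ}
    (hs : s.card = k) : ∃ f : Fin k → α, univ.val.map f = s := by
  obtain ⟨l, rfl⟩ := Quot.exists_rep s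
  subst hs
  exact ⟨l.get, (Fin.univ_val_map l.get).trans (congrArg _ (List.ofFn_get l))⟩

theorem exists_eq_map_sumElim_neg {α : Type*} [AddCommGroup α] [LinearOrder α]
    [IsOrderedAddMonoid α] {s : Multiset α} {k : ℕ} (hs : s.Nodup) (h0 : 0 ∉ s)
    (hneg : ∀ x ∈ s, -x ∈ s) (hcard : s.card = k + k) :
    ∃ ρ : Fin k → α, s = univ.val.map (Sum.elim ρ (-ρ)) := by
  have hsplit := Multiset.filter_add_not (0 < ·) s
  have hflip : s.filter (¬ 0 < ·) = (s.filter (0 < ·)).map Neg.neg := by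
    refine (Multiset.Nodup.ext (hs.filter _) ((hs.filter _).map neg_injective)).2 fun x ↦ ?_
    have hx0 : x ∈ s → x ≠ 0 := fun hx h ↦ h0 (h ▸ hx)
    simp only [Multiset.mem_filter, Multiset.mem_map, not_lt]
    refine ⟨fun ⟨hx, hle⟩ ↦ ⟨-x, ⟨hneg x hx, neg_pos.2 (hle.lt_of_ne (hx0 hx))⟩, neg_neg x⟩, ?_⟩
    rintro ⟨y, ⟨hy, hpos⟩, rfl⟩
    exact ⟨hneg y hy, (neg_neg_of_pos hpos).le⟩
  have hhalf : (s.filter (0 < ·)).card = k := by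
    have := congrArg Multiset.card hsplit
    rw [hflip, Multiset.card_add, Multiset.card_map] at this
    lia
  obtain ⟨ρ, hρ⟩ := exists_map_univ_val_eq_of_card hhalf
  refine ⟨ρ, ?_⟩
  rw [map_univ_val_sum, ← hsplit, hflip, ← hρ, Multiset.map_map]
  rfl

theorem roots_eq_map_of_injective {R ι : Type*} [CommRing R] [IsDomain R] [Fintype ι] {p : R[X]}
    {x : ι → R} (hp : p ≠ 0) (hx : Function.Injective x) (hroot : ∀ i, p.eval (x i) = 0)
    (hdeg : p.natDegree = Fintype.card ι) : p.roots = univ.val.map x := by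
  simpa using roots_eq_of_natDegree_le_card_of_ne_zero (S := univ.map ⟨x, hx⟩)
    (by simpa using hroot) (by simpa using hdeg.le) hp

theorem roots_eq_cons_map_of_injective {K ι : Type*} [Field K] [Fintype ι] {p : K[X]} {x : ι → K}
    (hp : p.Splits) (hx : Function.Injective x) (hroot : ∀ i, p.eval (x i) = 0)
    (hdeg : p.natDegree = Fintype.card ι + 1) :
    p.roots = (-(p.nextCoeff / p.leadingCoeff) - ∑ i, x i) ::ₘ univ.val.map x := by
  have hp0 : p ≠ 0 := by rintro rfl; simp at hdeg
  have hle : univ.val.map x ≤ p.roots := by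
    rw [Multiset.le_iff_subset (univ.nodup.map hx)]
    simpa [Multiset.subset_iff, hp0] using hroot
  obtain ⟨y, hy⟩ : ∃ y, p.roots = univ.val.map x + {y} := by
    obtain ⟨u, hu⟩ := Multiset.le_iff_exists_add.1 hle
    have hu1 : u.card = 1 := by
      simpa [← hp.natDegree_eq_card_roots, hdeg] using (congrArg Multiset.card hu).symm
    obtain ⟨y, rfl⟩ := Multiset.card_eq_one.1 hu1
    exact ⟨y, hu⟩
  have hvieta : ∑ i, x i + y = -(p.nextCoeff / p.leadingCoeff) := by
    rw [hp.nextCoeff_eq_neg_sum_roots_mul_leadingCoeff, hy]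
    have hlead := leadingCoeff_ne_zero.2 hp0
    simp only [Multiset.sum_add, Multiset.sum_singleton]
    field_simp
    simp
  rw [hy, ← hvieta, add_sub_cancel_left, add_comm, Multiset.singleton_add]

theorem re_inv_nonneg {z : ℂ} (hz : 0 ≤ z.re) : 0 ≤ z⁻¹.re := by
  rw [Complex.inv_re]
  exact div_nonneg hz (Complex.normSq_nonneg z)

theorem re_inv_pos {z : ℂ} (hz : 0 < z.re) : 0 < z⁻¹.re := by
  rw [Complex.inv_re]
  exact div_pos hz (Complex.normSq_pos.2 fun h ↦ by simp [h] at hz)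

theorem re_eval_derivative_div_eval_pos {p : ℂ[X]} {z : ℂ} (hp : p.natDegree ≠ 0)
    (hroots : ∀ a, p.IsRoot a → a.re < z.re) :
    0 < (p.derivative.eval z / p.eval z).re := by
  have hz : p.eval z ≠ 0 := fun h ↦ (hroots z h).false
  have hroots_ne : p.roots ≠ 0 := by
    rwa [← Multiset.card_pos, ← (IsAlgClosed.splits p).natDegree_eq_card_roots, pos_iff_ne_zero]
  rw [(IsAlgClosed.splits p).eval_derivative_div_eval_of_ne_zero hz, ← coe_reAddGroupHom,
    map_multiset_sum, Multiset.map_map]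
  have hpos : ∀ a ∈ p.roots, 0 < (1 / (z - a)).re := fun a ha ↦ by
    rw [one_div]
    exact re_inv_pos (by simpa using hroots a (isRoot_of_mem_roots ha))
  simpa using Multiset.sum_lt_sum_of_nonempty (f := fun _ ↦ (0 : ℝ)) hroots_ne hpos

theorem ne_zero_and_re_div_pos_of_recurrence {z : ℂ} {f : ℕ → ℂ} {a : ℕ → ℝ} (hz : 0 ≤ z.re)
    (hz0 : z ≠ 0) (ha : ∀ m, 0 ≤ a m) (h0 : f 0 ≠ 0) (h1 : 0 < (f 1 / (z * f 0)).re)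
    (hf : ∀ m, f (m + 2) = a m * f (m + 1) + z ^ 2 * f m) (m : ℕ) :
    f m ≠ 0 ∧ 0 < (f (m + 1) / (z * f m)).re := by
  induction m with
  | zero => exact ⟨h0, h1⟩
  | succ m ih =>
    obtain ⟨-, hpos⟩ := ih
    have hm1 : f (m + 1) ≠ 0 := fun h ↦ by simp [h] at hpos
    have hstep : f (m + 2) / (z * f (m + 1)) = a m * z⁻¹ + (f (m + 1) / (z * f m))⁻¹ := by
      rw [hf]
      field_simp
    refine ⟨hm1, ?_⟩
    rw [hstep, Complex.add_re, Complex.re_ofReal_mul]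
    exact add_pos_of_nonneg_of_pos (mul_nonneg (ha m) (re_inv_nonneg hz)) (re_inv_pos hpos)

/-! ### Padé numerators -/

theorem pcoef_ne_zero (m j : ℕ) : pcoef m j ≠ 0 := by
  simp [pcoef, Nat.factorial_ne_zero]

theorem pcoef_self (m : ℕ) : pcoef m m = 1 := by
  simp [pcoef, two_mul, Nat.factorial_ne_zero]

theorem pcoef_succ_self (m : ℕ) : pcoef (m + 1) m = (m + 1) * (m + 2) := by
  have hm : (m.factorial : ℂ) ≠ 0 := mod_cast m.factorial_ne_zero
  rw [pcoef, show 2 * (m + 1) - m = m + 1 + 1 by lia, Nat.add_sub_cancel_left,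
    Nat.factorial_succ (m + 1), Nat.factorial_succ m, Nat.factorial_one]
  push_cast
  field_simp
  ring

theorem pcoef_succ {m j : ℕ} (hj : j ≤ m) :
    pcoef (m + 1) j = 2 * (2 * m + 1) * pcoef m j
      + j * (j - 1) * ((2 * m - j).factorial / (j.factorial * (m + 1 - j).factorial)) := by
  obtain ⟨d, rfl⟩ := Nat.exists_eq_add_of_le hj
  have hfac (n : ℕ) : (n.factorial : ℂ) ≠ 0 := mod_cast n.factorial_ne_zero
  have hd : (d : ℂ) + 1 ≠ 0 := mod_cast d.succ_ne_zero
  rw [pcoef, pcoef, show 2 * (j + d + 1) - j = j + 2 * d + 1 + 1 by lia,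
    show 2 * (j + d) - j = j + 2 * d by lia, show j + d + 1 - j = d + 1 by lia,
    Nat.add_sub_cancel_left, Nat.factorial_succ (j + 2 * d + 1), Nat.factorial_succ (j + 2 * d),
    Nat.factorial_succ d]
  push_cast
  field_simp [hfac]
  ring

theorem pcoef_add_two_of_le_one (m : ℕ) {j : ℕ} (hj : j ≤ 1) :
    pcoef (m + 2) j = 2 * (2 * m + 3) * pcoef (m + 1) j := by
  have hvanish : (j : ℂ) * (j - 1) = 0 := by interval_cases j <;> simp
  rw [pcoef_succ (show j ≤ m + 1 by lia), hvanish]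
  push_cast
  ring

theorem pcoef_add_two_add_two {m k : ℕ} (hk : k < m) :
    pcoef (m + 2) (k + 2) = 2 * (2 * m + 3) * pcoef (m + 1) (k + 2) + pcoef m k := by
  have hfac (n : ℕ) : (n.factorial : ℂ) ≠ 0 := mod_cast n.factorial_ne_zero
  have hk1 : (k : ℂ) + 1 ≠ 0 := mod_cast k.succ_ne_zero
  have hk2 : (k : ℂ) + 1 + 1 ≠ 0 := mod_cast (k + 1).succ_ne_zero
  have hlast : ((k + 2 : ℕ) : ℂ) * ((k + 2 : ℕ) - 1) * ((2 * (m + 1) - (k + 2)).factorial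
      / ((k + 2).factorial * (m + 1 + 1 - (k + 2)).factorial)) = pcoef m k := by
    rw [pcoef, show 2 * (m + 1) - (k + 2) = 2 * m - k by lia,
      show m + 1 + 1 - (k + 2) = m - k by lia, Nat.factorial_succ (k + 1), Nat.factorial_succ k]
    push_cast
    field_simp [hfac]
    ring
  rw [pcoef_succ (m := m + 1) (by lia), hlast]
  push_cast
  ring

/-- The Padé numerator `P_m` as a polynomial; `Pgauss m` is its evaluation. -/
noncomputable def padePoly (m : ℕ) : ℂ[X] :=
  ∑ j ∈ range (m + 1), C (pcoef m j) * X ^ j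

theorem eval_padePoly (m : ℕ) (z : ℂ) : (padePoly m).eval z = Pgauss m z := by
  simp [padePoly, Pgauss, eval_finsetSum]

theorem coeff_padePoly (m j : ℕ) : (padePoly m).coeff j = if j ≤ m then pcoef m j else 0 := by
  simp [padePoly, finsetSum_coeff, coeff_X_pow]

theorem natDegree_padePoly (m : ℕ) : (padePoly m).natDegree = m := by
  refine natDegree_eq_of_le_of_coeff_ne_zero ?_ (by simp [coeff_padePoly, pcoef_ne_zero])
  exact natDegree_le_iff_coeff_eq_zero.2 fun j hj ↦ by simp [coeff_padePoly, hj]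

theorem padePoly_zero : padePoly 0 = 1 := by
  simp [padePoly, pcoef]

theorem padePoly_one : padePoly 1 = X + 2 := by
  simp [padePoly, pcoef, sum_range_succ, add_comm, ← C_ofNat]

theorem padePoly_add_two (m : ℕ) :
    padePoly (m + 2) = 2 * (2 * (m : ℂ[X]) + 3) * padePoly (m + 1) + X ^ 2 * padePoly m := by
  have hC : 2 * (2 * (m : ℂ[X]) + 3) = C (2 * (2 * m + 3) : ℂ) := by
    simp only [map_mul, map_add, map_natCast, map_ofNat]
  ext j
  rw [hC, coeff_add, coeff_C_mul, coeff_X_pow_mul']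
  simp only [coeff_padePoly]
  rcases j with _ | _ | k
  · simp [pcoef_add_two_of_le_one]
  · simp [pcoef_add_two_of_le_one]
  rcases lt_trichotomy k m with hlt | rfl | hgt
  · simp [pcoef_add_two_add_two hlt, hlt.le, show k + 1 ≤ m by lia]
  · simp [pcoef_self]
  · simp [hgt.not_ge, show ¬ k + 1 ≤ m by lia]

theorem Pgauss_zero (z : ℂ) : Pgauss 0 z = 1 := by
  simp [← eval_padePoly, padePoly_zero]

theorem Pgauss_one (z : ℂ) : Pgauss 1 z = z + 2 := by
  simp [← eval_padePoly, padePoly_one]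

theorem Pgauss_add_two (m : ℕ) (z : ℂ) :
    Pgauss (m + 2) z = 2 * (2 * m + 3) * Pgauss (m + 1) z + z ^ 2 * Pgauss m z := by
  simp [← eval_padePoly, padePoly_add_two]

theorem two_mul_derivative_padePoly_succ (m : ℕ) :
    2 * derivative (padePoly (m + 1)) = padePoly (m + 1) - X * padePoly m := by
  induction m using Nat.twoStepInduction with
  | zero => simp [padePoly_zero, padePoly_one]
  | one =>
    simp only [zero_add, padePoly_add_two, padePoly_zero, padePoly_one]
    simp only [CharP.cast_eq_zero, mul_zero, zero_add, mul_one, derivative_mul,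
      derivative_ofNat, zero_mul, add_zero, derivative_X, derivative_X_pow_succ, Nat.cast_one,
      map_add, map_one, pow_one]
    ring
  | more m ih ih' =>
    have hderiv : derivative (padePoly (m + 3)) =
        2 * (2 * ((m : ℂ[X]) + 1) + 3) * derivative (padePoly (m + 2)) + 2 * X * padePoly (m + 1)
          + X ^ 2 * derivative (padePoly (m + 1)) := by
      rw [padePoly_add_two]
      simp [derivative_mul, ← add_assoc, one_add_one_eq_two, C_ofNat]
    have hvalue := padePoly_add_two (m + 1)
    push_cast at hvalue
    linear_combination 2 * hderiv + 2 * (2 * ((m : ℂ[X]) + 1) + 3) * ih' + X ^ 2 * ih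
      - hvalue + X * padePoly_add_two m

theorem deriv_Pgauss (m : ℕ) (z : ℂ) :
    deriv (Pgauss m) z = (derivative (padePoly m)).eval z := by
  rw [← funext (eval_padePoly m), Polynomial.deriv]

theorem two_mul_deriv_Pgauss_succ (m : ℕ) (z : ℂ) :
    2 * deriv (Pgauss (m + 1)) z = Pgauss (m + 1) z - z * Pgauss m z := by
  simpa [deriv_Pgauss, ← eval_padePoly] using
    congrArg (eval z) (two_mul_derivative_padePoly_succ m)

theorem Pgauss_casoratian (m : ℕ) (z : ℂ) :
    Pgauss (m + 1) z * Pgauss m (-z) - Pgauss (m + 1) (-z) * Pgauss m z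
      = 2 * z * (-z ^ 2) ^ m := by
  induction m with
  | zero =>
    simp only [zero_add, Pgauss_zero, Pgauss_one]
    ring
  | succ m ih =>
    rw [Pgauss_add_two, Pgauss_add_two, pow_succ]
    linear_combination (-z ^ 2) * ih

theorem Pgauss_wronskian (m : ℕ) (z : ℂ) :
    deriv (Pgauss m) z * Pgauss m (-z) + deriv (Pgauss m) (-z) * Pgauss m z
      = Pgauss m z * Pgauss m (-z) - (-z ^ 2) ^ m := by
  cases m with
  | zero => simp [deriv_Pgauss, padePoly_zero, Pgauss_zero]
  | succ m =>
    linear_combination (1 / 2) * Pgauss (m + 1) (-z) * two_mul_deriv_Pgauss_succ m z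
      + (1 / 2) * Pgauss (m + 1) z * two_mul_deriv_Pgauss_succ m (-z)
      + z / 2 * Pgauss_casoratian m z

/-! ### Solutions of `R_m(z) = w` -/

theorem QPade_eq (m : ℕ) (w : ℂ) :
    QPade m w = padePoly m - C w * (padePoly m).comp (-X) := by
  simp only [QPade, padePoly, Polynomial.sum_comp, mul_sum, ← sum_sub_distrib]
  refine sum_congr rfl fun j _ ↦ ?_
  simp only [map_mul, map_sub, map_one, map_pow, map_neg, mul_comp, C_comp, pow_comp, X_comp,
    neg_pow (X : ℂ[X])]
  ring

theorem eval_QPade (m : ℕ) (w z : ℂ) :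
    (QPade m w).eval z = Pgauss m z - w * Pgauss m (-z) := by
  simp [QPade_eq, eval_padePoly]

theorem eval_derivative_QPade (m : ℕ) (w z : ℂ) :
    (derivative (QPade m w)).eval z = deriv (Pgauss m) z + w * deriv (Pgauss m) (-z) := by
  simp [QPade_eq, deriv_Pgauss, derivative_comp]

theorem coeff_QPade (m j : ℕ) (w : ℂ) :
    (QPade m w).coeff j = if j ≤ m then pcoef m j * (1 - (-1) ^ j * w) else 0 := by
  simp [QPade, finsetSum_coeff, -map_mul, -map_sub]

theorem natDegree_QPade_le (m : ℕ) (w : ℂ) : (QPade m w).natDegree ≤ m :=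
  natDegree_le_iff_coeff_eq_zero.2 fun j hj ↦ by simp [coeff_QPade, hj]

theorem natDegree_QPade {m : ℕ} {w : ℂ} (hw : 1 - (-1) ^ m * w ≠ 0) :
    (QPade m w).natDegree = m :=
  natDegree_eq_of_le_of_coeff_ne_zero (natDegree_QPade_le m w)
    (by simp [coeff_QPade, pcoef_ne_zero, hw])

theorem natDegree_QPade_neg_one (m : ℕ) : (QPade m (-1)).natDegree = m / 2 + m / 2 := by
  refine natDegree_eq_of_le_of_coeff_ne_zero ?_ ?_
  · refine natDegree_le_iff_coeff_eq_zero.2 fun j hj ↦ ?_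
    rw [coeff_QPade, ite_eq_right_iff]
    intro hjm
    have hodd : Odd j := by grind
    simp [hodd.neg_one_pow]
  · simp [coeff_QPade, pcoef_ne_zero, show m / 2 + m / 2 ≤ m by lia, one_add_one_eq_two]

theorem MgaussPoly_pi (m : ℕ) : MgaussPoly m π = QPade m (-1) := by
  simp [MgaussPoly, QPade, pow_succ]

theorem eval_QPade_eq_zero_of_Rgauss_eq {m : ℕ} {w z : ℂ} (hw : w ≠ 0) (h : Rgauss m z = w) :
    (QPade m w).eval z = 0 := by
  have hden : Pgauss m (-z) ≠ 0 := fun h0 ↦ hw (by rw [← h, Rgauss, h0, div_zero])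
  rw [eval_QPade, sub_eq_zero, ← h, Rgauss, div_mul_cancel₀ _ hden]

theorem eval_QPade_ne_zero {w z : ℂ} (hz : 0 ≤ z.re) (hz0 : z ≠ 0) (hw : w ≠ 1)
    (h : 0 < (2 / z + (1 + w) / (1 - w)).re) (m : ℕ) : (QPade m w).eval z ≠ 0 := by
  have hw' : 1 - w ≠ 0 := sub_ne_zero.2 hw.symm
  refine (ne_zero_and_re_div_pos_of_recurrence (f := fun m ↦ (QPade m w).eval z)
    (a := fun m ↦ 2 * (2 * m + 3)) hz hz0 (fun m ↦ by positivity) ?_ ?_ (fun m ↦ ?_) m).1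
  · simpa [eval_QPade, Pgauss_zero] using hw'
  · convert h using 2
    simp only [eval_QPade, Pgauss_zero, Pgauss_one]
    field_simp
    ring
  · simp only [eval_QPade, Pgauss_add_two]
    push_cast
    ring

theorem Pgauss_apply_zero (m : ℕ) : Pgauss m 0 = pcoef m 0 := by
  simp [← eval_padePoly, ← coeff_zero_eq_eval_zero, coeff_padePoly]

theorem Pgauss_ne_zero (m : ℕ) {z : ℂ} (hz : 0 ≤ z.re) : Pgauss m z ≠ 0 := by
  rcases eq_or_ne z 0 with rfl | hz0
  · rw [Pgauss_apply_zero]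
    exact pcoef_ne_zero m 0
  have hre : 0 ≤ (2 / z).re := by
    rw [div_eq_mul_inv, ← Complex.ofReal_ofNat, Complex.re_ofReal_mul]
    exact mul_nonneg zero_le_two (re_inv_nonneg hz)
  simpa [eval_QPade] using
    eval_QPade_ne_zero (w := 0) hz hz0 zero_ne_one (by simpa using by positivity) m

theorem re_eq_zero_of_isRoot_QPade_neg_one {m : ℕ} {z : ℂ} (h : (QPade m (-1)).IsRoot z) :
    z.re = 0 := by
  have hright {x : ℂ} (hx : (QPade m (-1)).IsRoot x) : x.re ≤ 0 := by
    by_contra! hpos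
    refine eval_QPade_ne_zero (w := -1) hpos.le (by rintro rfl; simp at hpos) (by norm_num) ?_ m hx
    rw [add_neg_cancel, zero_div, add_zero, div_eq_mul_inv, ← Complex.ofReal_ofNat,
      Complex.re_ofReal_mul]
    exact mul_pos zero_lt_two (re_inv_pos hpos)
  have hneg : (QPade m (-1)).IsRoot (-z) := by
    simpa [IsRoot, eval_QPade, add_comm] using h
  exact (hright h).antisymm (by simpa using hright hneg)

theorem ne_zero_of_isRoot_QPade_neg_one {m : ℕ} {z : ℂ} (h : (QPade m (-1)).IsRoot z) :
    z ≠ 0 := by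
  rintro rfl
  simp [IsRoot, eval_QPade, Pgauss_apply_zero, ← two_mul, pcoef_ne_zero] at h

theorem Pgauss_conj (m : ℕ) (z : ℂ) :
    Pgauss m (starRingEnd ℂ z) = starRingEnd ℂ (Pgauss m z) := by
  simp [Pgauss, pcoef]

theorem Pgauss_neg_mul_I (m : ℕ) (y : ℝ) :
    Pgauss m (-(y * I)) = starRingEnd ℂ (Pgauss m (y * I)) := by
  simp [← Pgauss_conj]

theorem differentiable_Pgauss (m : ℕ) : Differentiable ℂ (Pgauss m) := by
  rw [← funext (eval_padePoly m)]
  exact (padePoly m).differentiable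

theorem re_logDeriv_Pgauss_pos {m : ℕ} (hm : m ≠ 0) {z : ℂ} (hz : 0 ≤ z.re) :
    0 < (logDeriv (Pgauss m) z).re := by
  rw [logDeriv_apply, deriv_Pgauss, ← eval_padePoly]
  refine re_eval_derivative_div_eval_pos (by rwa [natDegree_padePoly]) fun a ha ↦ ?_
  by_contra! hle
  exact Pgauss_ne_zero m (hz.trans hle) (by rwa [← eval_padePoly])

theorem logDeriv_Rgauss {m : ℕ} {z : ℂ} (hz : Pgauss m z ≠ 0) (hz' : Pgauss m (-z) ≠ 0) :
    logDeriv (Rgauss m) z = logDeriv (Pgauss m) z + logDeriv (Pgauss m) (-z) := by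
  have hP := differentiable_Pgauss m
  have hR : Rgauss m = fun z ↦ Pgauss m z / (Pgauss m ∘ Neg.neg) z := rfl
  rw [hR, logDeriv_div z hz hz' (hP z) ((hP _).comp z differentiable_neg.differentiableAt),
    logDeriv_comp (hP _) differentiable_neg.differentiableAt]
  simp

theorem eval_derivative_QPade_of_isRoot {m : ℕ} {w z : ℂ} (hz : Pgauss m z ≠ 0)
    (hz' : Pgauss m (-z) ≠ 0) (h : (QPade m w).IsRoot z) :
    (derivative (QPade m w)).eval z = Pgauss m z * logDeriv (Rgauss m) z := by
  have hw : Pgauss m z = w * Pgauss m (-z) := sub_eq_zero.1 (eval_QPade m w z ▸ h)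
  rw [logDeriv_Rgauss hz hz', mul_add, logDeriv_apply, logDeriv_apply, mul_div_cancel₀ _ hz,
    eval_derivative_QPade]
  field_simp
  linear_combination -deriv (Pgauss m) (-z) * hw

/-- On the imaginary axis `R_m(iy) = exp(i φ(y))` with a real phase `φ`; this is the derivative
`φ'(y)`, which equals `R_m' / R_m` at `iy`. Its closed form comes from `Pgauss_wronskian`. -/
noncomputable def phaseDeriv (m : ℕ) (y : ℝ) : ℝ :=
  1 - (y ^ 2) ^ m / normSq (Pgauss m (y * I))

theorem phaseDeriv_neg (m : ℕ) (y : ℝ) : phaseDeriv m (-y) = phaseDeriv m y := by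
  simp [phaseDeriv, Pgauss_neg_mul_I]

theorem Pgauss_mul_I_ne_zero (m : ℕ) (y : ℝ) : Pgauss m (y * I) ≠ 0 :=
  Pgauss_ne_zero m (by simp)

theorem Pgauss_neg_mul_I_ne_zero (m : ℕ) (y : ℝ) : Pgauss m (-(y * I)) ≠ 0 :=
  Pgauss_ne_zero m (by simp)

theorem logDeriv_Rgauss_mul_I (m : ℕ) (y : ℝ) :
    logDeriv (Rgauss m) (y * I) = phaseDeriv m y := by
  have hP := Pgauss_mul_I_ne_zero m y
  have hP' := Pgauss_neg_mul_I_ne_zero m y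
  have hsq : -(y * I) ^ 2 = (y : ℂ) ^ 2 := by simp [mul_pow]
  have hwronskian := Pgauss_wronskian m (y * I)
  rw [hsq] at hwronskian
  rw [logDeriv_Rgauss hP hP', phaseDeriv, Complex.ofReal_sub, Complex.ofReal_div, ← mul_conj,
    ← Pgauss_neg_mul_I, logDeriv_apply, logDeriv_apply]
  push_cast
  field_simp
  linear_combination hwronskian

theorem phaseDeriv_pos {m : ℕ} (hm : m ≠ 0) (y : ℝ) : 0 < phaseDeriv m y := by
  rw [← Complex.ofReal_re (phaseDeriv m y), ← logDeriv_Rgauss_mul_I,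
    logDeriv_Rgauss (Pgauss_mul_I_ne_zero m y) (Pgauss_neg_mul_I_ne_zero m y), Complex.add_re]
  exact add_pos (re_logDeriv_Pgauss_pos hm (by simp)) (re_logDeriv_Pgauss_pos hm (by simp))

theorem phaseDeriv_lt_one (m : ℕ) {y : ℝ} (hy : y ≠ 0) : phaseDeriv m y < 1 := by
  have := Complex.normSq_pos.2 (Pgauss_mul_I_ne_zero m y)
  exact sub_lt_self 1 (by positivity)

theorem nodup_roots_QPade_neg_one {m : ℕ} (hm : m ≠ 0) : (QPade m (-1)).roots.Nodup := by
  refine Multiset.nodup_iff_count_le_one.2 fun z ↦ ?_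
  rw [count_roots]
  by_contra! hlt
  have hQ : QPade m (-1) ≠ 0 := by
    intro h
    simp [h] at hlt
  obtain ⟨hroot, hderiv⟩ := (one_lt_rootMultiplicity_iff_isRoot hQ).1 hlt
  obtain ⟨y, rfl⟩ : ∃ y : ℝ, z = y * I :=
    ⟨z.im, Complex.ext (by simp [re_eq_zero_of_isRoot_QPade_neg_one hroot]) (by simp)⟩
  have hP := Pgauss_mul_I_ne_zero m y
  rw [IsRoot, eval_derivative_QPade_of_isRoot hP (Pgauss_neg_mul_I_ne_zero m y) hroot,
    logDeriv_Rgauss_mul_I] at hderiv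
  exact mul_ne_zero hP (mod_cast (phaseDeriv_pos hm y).ne') hderiv

theorem exists_roots_QPade_neg_one {m : ℕ} (hm : m ≠ 0) :
    ∃ ρ : Fin (m / 2) → ℝ, Function.Injective (Sum.elim ρ (-ρ)) ∧
      (QPade m (-1)).roots = univ.val.map fun i ↦ ((Sum.elim ρ (-ρ) i : ℝ) : ℂ) * I := by
  set r := (QPade m (-1)).roots
  have hmul_I {z : ℂ} (hz : z ∈ r) : (z.im : ℂ) * I = z :=
    Complex.ext (by simp [re_eq_zero_of_isRoot_QPade_neg_one (isRoot_of_mem_roots hz)]) (by simp)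
  have hnodup : (r.map im).Nodup := (nodup_roots_QPade_neg_one hm).map_on fun z hz w hw h ↦ by
    rw [← hmul_I hz, ← hmul_I hw, h]
  have hzero : 0 ∉ r.map im := by
    intro h
    obtain ⟨z, hz, him⟩ := Multiset.mem_map.1 h
    refine ne_zero_of_isRoot_QPade_neg_one (isRoot_of_mem_roots hz) ?_
    rw [← hmul_I hz, him, Complex.ofReal_zero, zero_mul]
  have hneg : ∀ y ∈ r.map im, -y ∈ r.map im := by
    simp only [Multiset.mem_map]
    rintro _ ⟨z, hz, rfl⟩
    refine ⟨-z, (mem_roots'.2 ⟨(mem_roots'.1 hz).1, ?_⟩), rfl⟩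
    simpa [IsRoot, eval_QPade, add_comm] using (mem_roots'.1 hz).2
  have hcard : (r.map im).card = m / 2 + m / 2 := by
    rw [Multiset.card_map, ← (IsAlgClosed.splits _).natDegree_eq_card_roots,
      natDegree_QPade_neg_one]
  obtain ⟨ρ, hρ⟩ := exists_eq_map_sumElim_neg hnodup hzero hneg hcard
  refine ⟨ρ, fun i j h ↦ ?_, ?_⟩
  · exact Multiset.inj_on_of_nodup_map (hρ ▸ hnodup) i (mem_univ i) j (mem_univ j) h
  · calc
      r = (r.map im).map fun y : ℝ ↦ (y : ℂ) * I := by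
        rw [Multiset.map_map]
        exact (Multiset.map_id' r).symm.trans (Multiset.map_congr rfl fun z hz ↦ (hmul_I hz).symm)
      _ = univ.val.map fun i ↦ ((Sum.elim ρ (-ρ) i : ℝ) : ℂ) * I := by
        rw [hρ, Multiset.map_map]
        rfl

theorem exists_branch {m : ℕ} (hm : m ≠ 0) {y : ℝ} (hy : (QPade m (-1)).IsRoot (y * I)) :
    ∃ ζ : ℂ → ℂ, Filter.Tendsto ζ (𝓝 0) (𝓝 (y * I)) ∧
      (∀ᶠ t in 𝓝 0, Rgauss m (ζ t) = -Complex.exp t) ∧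
      (fun t ↦ ζ t - (y * I + ((phaseDeriv m y)⁻¹ : ℝ) * t)) =O[𝓝 0] fun t ↦ t ^ 2 := by
  have hden := Pgauss_neg_mul_I_ne_zero m y
  have hvalue : Rgauss m (y * I) = -1 := by
    rw [IsRoot, eval_QPade, sub_eq_zero] at hy
    rw [Rgauss, hy, mul_div_cancel_right₀ _ hden]
  have hP (z : ℂ) : AnalyticAt ℂ (Pgauss m) z := (differentiable_Pgauss m).analyticAt z
  have hR : AnalyticAt ℂ (Rgauss m) (y * I) := (hP _).div ((hP _).comp analyticAt_id.neg) hden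
  have hlog : logDeriv (Rgauss m) (y * I) ≠ 0 := by
    rw [logDeriv_Rgauss_mul_I]
    exact mod_cast (phaseDeriv_pos hm y).ne'
  obtain ⟨ζ, hζ, hζ0, hζ', hRζ⟩ := exists_analyticAt_eq_mul_exp hR hlog
  refine ⟨ζ, hζ0 ▸ hζ.continuousAt.tendsto, by simpa [hvalue] using hRζ, ?_⟩
  rw [logDeriv_Rgauss_mul_I] at hζ'
  simpa [hζ0, mul_comm] using isBigO_sub_linear_of_analyticAt_zero hζ hζ'

section Branches

variable {ι : Type*} {m : ℕ} {a : ι → ℂ} {ζ : ι → ℂ → ℂ}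

theorem eventually_injective_and_eval_QPade_eq_zero [Finite ι] (ha : Function.Injective a)
    (hζ : ∀ i, Filter.Tendsto (ζ i) (𝓝 0) (𝓝 (a i)))
    (hR : ∀ i, ∀ᶠ t in 𝓝 0, Rgauss m (ζ i t) = -Complex.exp t) :
    ∀ᶠ t in 𝓝 0, (Function.Injective fun i ↦ ζ i t) ∧
      ∀ i, (QPade m (-Complex.exp t)).eval (ζ i t) = 0 := by
  filter_upwards [eventually_injective_of_tendsto ha hζ, Filter.eventually_all.2 hR] with t hinj hRt
  exact ⟨hinj, fun i ↦
    eval_QPade_eq_zero_of_Rgauss_eq (neg_ne_zero.2 (Complex.exp_ne_zero t)) (hRt i)⟩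

theorem eventually_roots_of_even [Fintype ι] (hm : Even m) (hcard : Fintype.card ι = m)
    (ha : Function.Injective a) (hζ : ∀ i, Filter.Tendsto (ζ i) (𝓝 0) (𝓝 (a i)))
    (hR : ∀ i, ∀ᶠ t in 𝓝 0, Rgauss m (ζ i t) = -Complex.exp t) :
    ∀ᶠ t in 𝓝 0, (QPade m (-Complex.exp t)).roots = univ.val.map fun i ↦ ζ i t := by
  have hlead : ∀ᶠ t : ℂ in 𝓝 0, 1 - (-1) ^ m * -Complex.exp t ≠ 0 := by
    refine ContinuousAt.eventually_ne (by fun_prop) ?_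
    norm_num [hm.neg_one_pow]
  filter_upwards [eventually_injective_and_eval_QPade_eq_zero ha hζ hR, hlead]
    with t ⟨hinj, hroot⟩ ht
  have hdeg := natDegree_QPade ht
  refine roots_eq_map_of_injective (fun h ↦ ht ?_) hinj hroot (hdeg.trans hcard.symm)
  simpa [coeff_QPade, pcoef_self] using congrArg (coeff · m) h

theorem exists_eventually_roots_of_odd [Fintype ι] (hm : Odd m) (hcard : Fintype.card ι + 1 = m)
    (ha : Function.Injective a) (hζ : ∀ i, Filter.Tendsto (ζ i) (𝓝 0) (𝓝 (a i)))
    (hR : ∀ i, ∀ᶠ t in 𝓝 0, Rgauss m (ζ i t) = -Complex.exp t) :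
    ∃ ξ : ℂ → ℂ, (∀ᶠ t in 𝓝[≠] 0,
        (QPade m (-Complex.exp t)).roots = ξ t ::ₘ univ.val.map fun i ↦ ζ i t) ∧
      (fun t ↦ ξ t - ((2 * m * (m + 1) : ℝ) : ℂ) / t) =O[𝓝[≠] 0] fun _ ↦ (1 : ℂ) := by
  obtain ⟨n, rfl⟩ : ∃ n, m = n + 1 := ⟨_, hcard.symm⟩
  have hn : Even n := by grind
  let ξ : ℂ → ℂ := fun t ↦
    (n + 1) * (n + 2) * ((Complex.exp t + 1) / (Complex.exp t - 1)) - ∑ i, ζ i t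
  have hexp : ∀ᶠ t : ℂ in 𝓝[≠] 0, Complex.exp t ≠ 1 := by
    simpa using (Complex.hasDerivAt_exp 0).eventually_ne (Complex.exp_ne_zero 0)
  refine ⟨ξ, ?_, ?_⟩
  · filter_upwards [(eventually_injective_and_eval_QPade_eq_zero ha hζ hR).filter_mono
      nhdsWithin_le_nhds, hexp] with t ⟨hinj, hroot⟩ ht
    have hlead : 1 - (-1) ^ (n + 1) * -Complex.exp t = 1 - Complex.exp t := by
      simp [hn.add_one.neg_one_pow]
    have hdeg : (QPade (n + 1) (-Complex.exp t)).natDegree = n + 1 :=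
      natDegree_QPade (hlead ▸ sub_ne_zero.2 ht.symm)
    rw [roots_eq_cons_map_of_injective (IsAlgClosed.splits _) hinj hroot (hdeg.trans hcard.symm)]
    congr 2
    rw [nextCoeff_of_natDegree_pos (by lia), leadingCoeff, hdeg, coeff_QPade, coeff_QPade, hlead]
    simp only [Nat.add_sub_cancel, Nat.le_succ, le_refl, if_true, hn.neg_one_pow, pcoef_self,
      pcoef_succ_self]
    have hexp_sub := sub_ne_zero.2 ht
    have hsub_exp := sub_ne_zero.2 ht.symm
    field_simp
    ring
  · have hsum : (fun t ↦ ∑ i, ζ i t) =O[𝓝[≠] 0] fun _ ↦ (1 : ℂ) :=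
      ((tendsto_finsetSum _ fun i _ ↦ hζ i).isBigO_one ℂ).mono nhdsWithin_le_nhds
    refine ((isBigO_exp_add_one_div_exp_sub_one.const_mul_left ((n + 1) * (n + 2))).sub
      hsum).congr_left fun t ↦ ?_
    simp only [ξ]
    push_cast
    ring

end Branches

theorem pade_solutions_theta_pi (m : ℕ) (hm : 1 ≤ m) :
    ∃ (ρ : Fin (m / 2) → ℝ) (zp zn : Fin (m / 2) → ℂ → ℂ) (γ : Fin (m / 2) → ℝ),
      (MgaussPoly m π).roots
        = Multiset.map (fun ℓ => (ρ ℓ : ℂ) * Complex.I) Finset.univ.val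
            + Multiset.map (fun ℓ => -((ρ ℓ : ℂ) * Complex.I)) Finset.univ.val ∧
      (∀ ℓ, 1 < γ ℓ ∧
        (∀ᶠ t : ℂ in 𝓝[≠] (0 : ℂ),
          Rgauss m (zp ℓ t) = -Complex.exp t ∧ Rgauss m (zn ℓ t) = -Complex.exp t) ∧
        ((fun t : ℂ => zp ℓ t - ((ρ ℓ : ℂ) * Complex.I + (γ ℓ : ℂ) * t))
          =O[𝓝 (0 : ℂ)] fun t : ℂ => t ^ 2) ∧
        ((fun t : ℂ => zn ℓ t - (-((ρ ℓ : ℂ) * Complex.I) + (γ ℓ : ℂ) * t))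
          =O[𝓝 (0 : ℂ)] fun t : ℂ => t ^ 2)) ∧
      (Even m →
        ∀ᶠ t : ℂ in 𝓝[≠] (0 : ℂ),
          (QPade m (-Complex.exp t)).roots
            = Multiset.map (fun ℓ => zp ℓ t) Finset.univ.val
                + Multiset.map (fun ℓ => zn ℓ t) Finset.univ.val) ∧
      (Odd m → ∃ (zlast : ℂ → ℂ) (Em : ℝ),
        0 < Em ∧
        (∀ᶠ t : ℂ in 𝓝[≠] (0 : ℂ),
          (QPade m (-Complex.exp t)).roots
            = zlast t ::ₘ (Multiset.map (fun ℓ => zp ℓ t) Finset.univ.val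
                + Multiset.map (fun ℓ => zn ℓ t) Finset.univ.val)) ∧
        ((fun t : ℂ => zlast t - (Em : ℂ) / t)
          =O[𝓝[≠] (0 : ℂ)] fun _ : ℂ => (1 : ℂ))) := by
  have hm0 : m ≠ 0 := by lia
  obtain ⟨ρ, hinj, hroots⟩ := exists_roots_QPade_neg_one hm0
  let y : Fin (m / 2) ⊕ Fin (m / 2) → ℝ := Sum.elim ρ (-ρ)
  have hroot (i) : (QPade m (-1)).IsRoot (y i * I) :=
    isRoot_of_mem_roots (hroots ▸ Multiset.mem_map_of_mem _ (mem_univ i))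
  choose ζ hζ hR hO using fun i ↦ exists_branch hm0 (hroot i)
  have ha : Function.Injective fun i ↦ (y i : ℂ) * I :=
    (mul_left_injective₀ I_ne_zero).comp (Complex.ofReal_injective.comp hinj)
  have hcard : Fintype.card (Fin (m / 2) ⊕ Fin (m / 2)) = m / 2 + m / 2 := by simp
  refine ⟨ρ, fun ℓ ↦ ζ (.inl ℓ), fun ℓ ↦ ζ (.inr ℓ), fun ℓ ↦ (phaseDeriv m (ρ ℓ))⁻¹, ?_,
    fun ℓ ↦ ⟨?_, ?_, hO (.inl ℓ), ?_⟩, fun heven ↦ ?_, fun hodd ↦ ?_⟩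
  · simp [MgaussPoly_pi, hroots, map_univ_val_sum]
  · have hρ : ρ ℓ ≠ 0 := by simpa [y] using ne_zero_of_isRoot_QPade_neg_one (hroot (.inl ℓ))
    exact (one_lt_inv₀ (phaseDeriv_pos hm0 _)).2 (phaseDeriv_lt_one m hρ)
  · exact ((hR (.inl ℓ)).and (hR (.inr ℓ))).filter_mono nhdsWithin_le_nhds
  · simpa [y, phaseDeriv_neg] using hO (.inr ℓ)
  · simpa only [map_univ_val_sum] using
      (eventually_roots_of_even heven (by grind) ha hζ hR).filter_mono nhdsWithin_le_nhds
  · obtain ⟨ξ, hξ, hξO⟩ := exists_eventually_roots_of_odd hodd (by grind) ha hζ hR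
    exact ⟨ξ, _, by positivity, by simpa only [map_univ_val_sum] using hξ, hξO⟩
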